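/- Let k be a field of characteristic p > 0, let r ≥ 1, and let t₁, …, t_r, x, y be indeterminates. Set u = x^p(1+y) and v = y^p + x, let K* = k(t₁,…,t_r,x,y), and let K = k(t₁,…,t_r,u,v) ⊆ K*. Then K ⊆ K* is a finite separable field extension, and K and K* are finitely generated field extensions of k of transcendence degree r + 2. -/

import Mathlib

open MvPolynomial IntermediateField

/-- A simple root of a polynomial over a field is separable over that field. -/
theorem isSeparable_of_aeval_derivative_ne_zero {F E : Type*} [Field F] [Field E] [Algebra F E]
    {f : Polynomial F} {a : E} (hf : Polynomial.aeval a f = 0)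
    (hf' : Polynomial.aeval a (Polynomial.derivative f) ≠ 0) : IsSeparable F a := by
  have hf0 : f ≠ 0 := by
    rintro rfl
    simp at hf'
  have hint : IsIntegral F a := IsAlgebraic.isIntegral ⟨f, hf0, hf⟩
  refine (Polynomial.separable_iff_derivative_ne_zero (minpoly.irreducible hint)).2 fun h ↦ hf' ?_
  obtain ⟨g, rfl⟩ := minpoly.dvd F a hf
  simp [Polynomial.derivative_mul, h]

/-- If `x ≠ 0` and both `x ^ p * (1 + y)` and `y ^ p + x` lie in the base field of
characteristic `p`, then `y` is separable: it is a simple root of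
`(v ^ p - Y ^ (p ^ 2)) * (1 + Y) - u`. -/
theorem isSeparable_of_pow_mul_one_add_of_pow_add {F E : Type*} [Field F] [Field E] [Algebra F E]
    {p : ℕ} (hp : p.Prime) [CharP F p] {x y : E} (hx : x ≠ 0) {u v : F}
    (hu : algebraMap F E u = x ^ p * (1 + y)) (hv : algebraMap F E v = y ^ p + x) :
    IsSeparable F y := by
  have : Fact p.Prime := ⟨hp⟩
  have : CharP E p := charP_of_injective_algebraMap (algebraMap F E).injective p
  have hpow : algebraMap F E v ^ p - y ^ p ^ 2 = x ^ p := by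
    rw [hv, add_pow_char, ← pow_mul, ← sq, add_sub_cancel_left]
  refine isSeparable_of_aeval_derivative_ne_zero
    (f := (Polynomial.C (v ^ p) - Polynomial.X ^ p ^ 2) * (1 + Polynomial.X) - Polynomial.C u)
    ?_ ?_
  · simp [hpow, hu]
  · rw [Polynomial.derivative_sub, Polynomial.derivative_mul, Polynomial.derivative_sub,
      Polynomial.derivative_C, Polynomial.derivative_C, Polynomial.derivative_X_pow]
    simpa [hpow] using fun h ↦ absurd h hx

/-- The indeterminates generate the field of rational functions. -/
theorem adjoin_range_algebraMap_X_eq_top (σ k : Type*) [Field k] :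
    IntermediateField.adjoin k (Set.range fun i : σ ↦
      algebraMap (MvPolynomial σ k) (FractionRing (MvPolynomial σ k)) (X i)) = ⊤ := by
  rw [eq_top_iff]
  rintro z -
  set L := IntermediateField.adjoin k (Set.range fun i : σ ↦
    algebraMap (MvPolynomial σ k) (FractionRing (MvPolynomial σ k)) (X i))
  have hpoly (f : MvPolynomial σ k) : algebraMap _ (FractionRing (MvPolynomial σ k)) f ∈ L := by
    induction f using MvPolynomial.induction_on with
    | C a =>
      rw [← MvPolynomial.algebraMap_eq, ← IsScalarTower.algebraMap_apply]
      exact L.algebraMap_mem a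
    | add f g hf hg => rw [map_add]; exact add_mem hf hg
    | mul_X f i hf =>
      rw [map_mul]
      exact mul_mem hf (subset_adjoin k _ ⟨i, rfl⟩)
  obtain ⟨f, g, -, rfl⟩ := IsFractionRing.div_surjective (A := MvPolynomial σ k) z
  exact div_mem (hpoly f) (hpoly g)

/-- The indeterminates form a transcendence basis of the field of rational functions. -/
theorem isTranscendenceBasis_algebraMap_X (σ k : Type*) [Field k] :
    IsTranscendenceBasis k fun i : σ ↦
      algebraMap (MvPolynomial σ k) (FractionRing (MvPolynomial σ k)) (X i) :=
  have : Algebra.IsAlgebraic (MvPolynomial σ k) (FractionRing (MvPolynomial σ k)) :=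
    IsLocalization.isAlgebraic _ (nonZeroDivisors _)
  (IsTranscendenceBasis.mvPolynomial σ k).algebraMap_comp

/-- A transcendence basis of an algebraic extension `E` of `K` can be replaced by one lying in `K`
with the same index type. -/
theorem IsTranscendenceBasis.exists_of_isAlgebraic {ι k K E : Type*} [Field k] [Field K] [Field E]
    [Algebra k K] [Algebra k E] [Algebra K E] [IsScalarTower k K E] [Algebra.IsAlgebraic K E]
    {b : ι → E} (hb : IsTranscendenceBasis k b) :
    ∃ b' : ι → K, IsTranscendenceBasis k b' := by
  obtain ⟨s, hs⟩ := exists_isTranscendenceBasis k K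
  obtain ⟨e⟩ := Cardinal.lift_mk_eq'.1
    (hb.lift_cardinalMk_eq (hs.algebraMap_comp (A := E)))
  exact ⟨_, (isTranscendenceBasis_equiv e).2 hs⟩

/-- A field extension generated by one separable element is finite and separable. -/
theorem IsSeparable.finiteDimensional_and_isSeparable_of_adjoin_eq_top {F E : Type*} [Field F]
    [Field E] [Algebra F E] {a : E} (ha : IsSeparable F a) (htop : F⟮a⟯ = ⊤) :
    FiniteDimensional F E ∧ Algebra.IsSeparable F E := by
  have hfin := adjoin.finiteDimensional ha.isIntegral
  have hsep := (isSeparable_adjoin_simple_iff_isSeparable F E).2 ha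
  rw [htop] at hfin hsep
  exact ⟨topEquiv.toLinearEquiv.finiteDimensional, (isSeparable_top F E).1 hsep⟩

/-- Let `k` be a field of characteristic `p > 0`, `r ≥ 1`, and
`t₁, …, t_r, x, y` indeterminates.  Set `u = x^p(1+y)`, `v = y^p + x`, let
`K* = k(t₁,…,t_r,x,y)` and `K = k(t₁,…,t_r,u,v) ⊆ K*`.  Then `K ⊆ K*` is a
finite separable field extension, and `K` and `K*` are finitely generated
field extensions of `k` of transcendence degree `r + 2`. -/
theorem stmt12 (k : Type) [Field k] (p : ℕ) (hp : p.Prime) [CharP k p]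
    (r : ℕ) (hr : 1 ≤ r)
    (t : Fin r → FractionRing (MvPolynomial (Fin r ⊕ Fin 2) k))
    (x y u v : FractionRing (MvPolynomial (Fin r ⊕ Fin 2) k))
    (ht : ∀ i, t i = algebraMap (MvPolynomial (Fin r ⊕ Fin 2) k) _ (X (Sum.inl i)))
    (hx : x = algebraMap (MvPolynomial (Fin r ⊕ Fin 2) k) _ (X (Sum.inr 0)))
    (hy : y = algebraMap (MvPolynomial (Fin r ⊕ Fin 2) k) _ (X (Sum.inr 1)))
    (huv : u = x ^ p * (1 + y)) (hvv : v = y ^ p + x)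
    (K : IntermediateField k (FractionRing (MvPolynomial (Fin r ⊕ Fin 2) k)))
    (hK : K = IntermediateField.adjoin k (Set.range t ∪ {u, v})) :
    FiniteDimensional K (FractionRing (MvPolynomial (Fin r ⊕ Fin 2) k)) ∧
    Algebra.IsSeparable K (FractionRing (MvPolynomial (Fin r ⊕ Fin 2) k)) ∧
    -- `K` is a finitely generated field extension of `k`:
    K.FG ∧
    -- `K*` is a finitely generated field extension of `k`:
    (∃ s : Finset (FractionRing (MvPolynomial (Fin r ⊕ Fin 2) k)),
      IntermediateField.adjoin k (s : Set (FractionRing (MvPolynomial (Fin r ⊕ Fin 2) k))) = ⊤) ∧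
    -- `K` has transcendence degree `r + 2` over `k`:
    (∃ b : Fin (r + 2) → K, IsTranscendenceBasis k b) ∧
    -- `K*` has transcendence degree `r + 2` over `k`:
    (∃ b : Fin (r + 2) → FractionRing (MvPolynomial (Fin r ⊕ Fin 2) k),
      IsTranscendenceBasis k b) := by
  have hx0 : x ≠ 0 := by simp [hx]
  have htK (i : Fin r) : t i ∈ K := hK ▸ subset_adjoin k _ (Or.inl ⟨i, rfl⟩)
  have huK : u ∈ K := hK ▸ subset_adjoin k _ (by simp)
  have hvK : v ∈ K := hK ▸ subset_adjoin k _ (by simp)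
  have : CharP K p := charP_of_injective_algebraMap (algebraMap k K).injective p
  have hsep : IsSeparable K y :=
    isSeparable_of_pow_mul_one_add_of_pow_add hp hx0 (u := ⟨u, huK⟩) (v := ⟨v, hvK⟩) huv hvv
  have htop : K⟮y⟯ = ⊤ := by
    have hy' : y ∈ K⟮y⟯ := mem_adjoin_simple_self K y
    have hKy {z} (hz : z ∈ K) : z ∈ K⟮y⟯ := K⟮y⟯.algebraMap_mem ⟨z, hz⟩
    rw [← restrictScalars_eq_top_iff (K := k), eq_top_iff, ← adjoin_range_algebraMap_X_eq_top,
      adjoin_le_iff]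
    rintro _ ⟨i | i, rfl⟩
    · change algebraMap _ _ (X (Sum.inl i)) ∈ K⟮y⟯
      exact ht i ▸ hKy (htK i)
    · fin_cases i
      · have hxv : x = v - y ^ p := by rw [hvv]; ring
        change algebraMap _ _ (X (Sum.inr 0)) ∈ K⟮y⟯
        rw [← hx, hxv]
        exact sub_mem (hKy hvK) (pow_mem hy' p)
      · change algebraMap _ _ (X (Sum.inr 1)) ∈ K⟮y⟯
        exact hy ▸ hy'
  obtain ⟨hfin, hsepExt⟩ := hsep.finiteDimensional_and_isSeparable_of_adjoin_eq_top htop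
  have hbasis := (isTranscendenceBasis_equiv finSumFinEquiv.symm).2
    (isTranscendenceBasis_algebraMap_X (Fin r ⊕ Fin 2) k)
  refine ⟨hfin, hsepExt, ?_, ?_, hbasis.exists_of_isAlgebraic, _, hbasis⟩
  · exact hK ▸ fg_adjoin_of_finite ((Set.finite_range t).union (Set.toFinite _))
  · exact ⟨(Set.finite_range _).toFinset, by
      rw [Set.Finite.coe_toFinset]
      exact adjoin_range_algebraMap_X_eq_top _ _⟩
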